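/- arXiv:1712.01973 — 2 statements merged into one kernel-verified Lean document; each statement's English description precedes it below -/
import Mathlib

section
/- Let P ⊆ ℝ^d be a full-dimensional polytope. Then for every ε > 0 there exists N > 0 such that for every vector v ∈ ℝ^d and every real s > N, |L_{P+v}(s)/s^d − vol(P)| < ε, where vol denotes Lebesgue measure on ℝ^d. In particular lim_{s→∞} L_{P+v}(s)/s^d = vol(P), uniformly in v. -/
open Set MeasureTheory Pointwise

/-- The set of integer lattice points in `ℝ^d` (as `Fin d → ℝ`). -/
def latticePts (d : ℕ) : Set (Fin d → ℝ) := {x | ∀ i, ∃ m : ℤ, x i = m}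

/-- The real-parameter Ehrhart function: number of lattice points in `s • P`. -/
noncomputable def ehrhart {d : ℕ} (P : Set (Fin d → ℝ)) (s : ℝ) : ℕ :=
  ((s • P) ∩ latticePts d).ncard

/-- Translate of a set by a vector. -/
def translateSet {d : ℕ} (P : Set (Fin d → ℝ)) (v : Fin d → ℝ) : Set (Fin d → ℝ) :=
  (fun x => x + v) '' P

/-- A polytope: convex hull of a nonempty finite set of points. -/
def IsPolytope {d : ℕ} (P : Set (Fin d → ℝ)) : Prop :=
  ∃ V : Finset (Fin d → ℝ), V.Nonempty ∧ P = convexHull ℝ (V : Set (Fin d → ℝ))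

/-- A rational polytope: convex hull of a nonempty finite set of rational points. -/
def IsRationalPolytope {d : ℕ} (P : Set (Fin d → ℝ)) : Prop :=
  ∃ V : Finset (Fin d → ℝ), V.Nonempty ∧ (∀ v ∈ V, ∀ i, ∃ q : ℚ, v i = (q : ℝ)) ∧
    P = convexHull ℝ (V : Set (Fin d → ℝ))

/-- Standard inner product on `Fin d → ℝ`. -/
def dotProd {d : ℕ} (a x : Fin d → ℝ) : ℝ := ∑ i, a i * x i

/-- A semi-rational polytope: a polytope expressible as a finite intersection of
half-spaces with integer normal vectors. -/
def IsSemiRationalPolytope {d : ℕ} (P : Set (Fin d → ℝ)) : Prop :=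
  IsPolytope P ∧ ∃ (n : ℕ) (a : Fin n → Fin d → ℤ) (b : Fin n → ℝ),
    P = ⋂ i, {x : Fin d → ℝ | dotProd (fun j => (a i j : ℝ)) x ≤ b i}

/-!
Tile space by the translates of a fundamental domain `F ⊆ ball 0 R` of a lattice `Λ`, and keep the
tiles `g + F` with `g ∈ S ∩ Λ`. Their total volume is `#(S ∩ Λ) * vol F`, and a point at which
their union differs from `S` is within `R` of a point on the other side of the boundary of `S`,
hence, by connectedness of balls, within `R` of that boundary. So `#(S ∩ Λ) * vol F` differs from
`vol S` by at most the volume of the `R`-neighbourhood of the boundary. For `S = s • (P + v)`,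
after division by `s ^ d`, this error is the volume of the `R / s`-neighbourhood of the boundary of
`P`, which does not depend on `v` and tends to `vol (∂P)`. This is `0` when `P` is convex.
-/

open Bornology Filter Metric Topology

section Frontier

theorem nonempty_inter_frontier_of_isPreconnected {X : Type*} [TopologicalSpace X] {s t : Set X}
    (ht : IsPreconnected t) (hts : (t ∩ s).Nonempty) (htsc : (t ∩ sᶜ).Nonempty) :
    (t ∩ frontier s).Nonempty := by
  by_contra hempty
  have hcover : t ⊆ interior s ∪ interior sᶜ := fun x hx ↦ by
    rw [← compl_frontier_eq_union_interior]
    exact fun hxs ↦ hempty ⟨x, hx, hxs⟩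
  have hdisj : Disjoint (interior s) (interior sᶜ) :=
    disjoint_compl_right.mono interior_subset interior_subset
  rcases ht.subset_or_subset isOpen_interior isOpen_interior hdisj hcover with hsub | hsub
  · obtain ⟨x, hxt, hxs⟩ := htsc
    exact hxs (interior_subset (hsub hxt))
  · obtain ⟨x, hxt, hxs⟩ := hts
    exact interior_subset (hsub hxt) hxs

theorem mem_thickening_frontier {E : Type*} [SeminormedAddCommGroup E] [NormedSpace ℝ E]
    {s : Set E} {x y : E} {r : ℝ} (hxy : dist x y < r) (hx : x ∈ s) (hy : y ∉ s) :
    x ∈ thickening r (frontier s) := by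
  have hball : IsPreconnected (ball x r) := (convex_ball x r).isPreconnected
  obtain ⟨z, hzx, hz⟩ := nonempty_inter_frontier_of_isPreconnected hball
    ⟨x, mem_ball_self (dist_nonneg.trans_lt hxy), hx⟩ ⟨y, mem_ball'.2 hxy, hy⟩
  exact mem_thickening_iff.2 ⟨z, hz, mem_ball'.1 hzx⟩

theorem frontier_smul_set₀ {G₀ X : Type*} [GroupWithZero G₀] [MulAction G₀ X]
    [TopologicalSpace X] [ContinuousConstSMul G₀ X] {c : G₀} (hc : c ≠ 0) (s : Set X) :
    frontier (c • s) = c • frontier s :=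
  ((Homeomorph.smulOfNeZero c hc).image_frontier s).symm

theorem frontier_vadd_set {G X : Type*} [AddGroup G] [AddAction G X]
    [TopologicalSpace X] [ContinuousConstVAdd G X] (g : G) (s : Set X) :
    frontier (g +ᵥ s) = g +ᵥ frontier s :=
  ((Homeomorph.vadd g).image_frontier s).symm

end Frontier

section Thickening

theorem thickening_smul_set₀ {𝕜 E : Type*} [NormedDivisionRing 𝕜] [SeminormedAddCommGroup E]
    [Module 𝕜 E] [NormSMulClass 𝕜 E] {c : 𝕜} (hc : c ≠ 0) (r : ℝ) (s : Set E) :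
    thickening r (c • s) = c • thickening (r / ‖c‖) s := by
  ext x
  have hdist (y : E) : dist x (c • y) = ‖c‖ * dist (c⁻¹ • x) y := by
    rw [← dist_smul₀, smul_inv_smul₀ hc]
  rw [mem_smul_set_iff_inv_smul_mem₀ hc, mem_thickening_iff, mem_thickening_iff, ← image_smul,
    exists_mem_image]
  simp only [hdist, lt_div_iff₀' (norm_pos_iff.2 hc)]

theorem thickening_vadd_set {G X : Type*} [AddGroup G] [AddAction G X] [PseudoMetricSpace X]
    [IsIsometricVAdd G X] (g : G) (r : ℝ) (s : Set X) :
    thickening r (g +ᵥ s) = g +ᵥ thickening r s := by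
  ext x
  have hdist (y : X) : dist x (g +ᵥ y) = dist (-g +ᵥ x) y := by
    rw [← dist_vadd g (-g +ᵥ x), vadd_neg_vadd]
  rw [mem_vadd_set_iff_neg_vadd_mem, mem_thickening_iff, mem_thickening_iff, ← image_vadd,
    exists_mem_image]
  simp only [hdist]

theorem tendsto_measureReal_thickening {X : Type*} [PseudoMetricSpace X] [ProperSpace X]
    [MeasurableSpace X] [OpensMeasurableSpace X] {μ : Measure X} [IsFiniteMeasureOnCompacts μ]
    {s : Set X} (hs : IsBounded s) :
    Tendsto (fun r ↦ μ.real (thickening r s)) (𝓝[>] 0) (𝓝 (μ.real (closure s))) := by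
  have hfin : ∃ r > 0, μ (thickening r s) ≠ ⊤ :=
    ⟨1, one_pos, hs.thickening.measure_lt_top.ne⟩
  exact (ENNReal.tendsto_toReal hs.closure.measure_lt_top.ne).comp
    (tendsto_measure_thickening hfin)

end Thickening

section FundamentalDomain

theorem measureReal_vadd_fundamentalDomain {G X : Type*} [AddGroup G] [Countable G]
    [AddAction G X] [MeasurableSpace X] [MeasurableConstVAdd G X] {μ : Measure X}
    [VAddInvariantMeasure G X μ] {F : Set X} (hF : IsAddFundamentalDomain G F μ) (A : Set G) :
    μ.real (A +ᵥ F) = A.ncard * μ.real F := by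
  have hmeasure : μ (A +ᵥ F) = A.encard * μ F := by
    rw [← iUnion_vadd_set, measure_biUnion₀ A.to_countable (fun _ _ _ _ hne ↦ hF.aedisjoint hne)
      fun g _ ↦ hF.nullMeasurableSet_vadd g]
    simp only [measure_vadd, ENNReal.tsum_set_const]
  have hcard : (A.encard : ENNReal).toReal = A.ncard := by
    rw [ncard_def]
    cases A.encard <;> simp
  rw [measureReal_def, hmeasure, ENNReal.toReal_mul, hcard, measureReal_def]

theorem measureReal_inter_add_fundamentalDomain {E : Type*} [AddGroup E] [MeasurableSpace E]
    [MeasurableAdd E] {Λ : AddSubgroup E} [Countable Λ] {μ : Measure E} [μ.IsAddLeftInvariant]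
    {F : Set E} (hF : IsAddFundamentalDomain Λ F μ) (S : Set E) :
    μ.real (S ∩ Λ + F) = (S ∩ Λ).ncard * μ.real F := by
  have himage : S ∩ Λ = ((↑) : Λ → E) '' ((↑) ⁻¹' S) := by
    rw [image_preimage_eq_inter_range, Subtype.range_coe]
  have hvadd : S ∩ Λ + F = ((↑) ⁻¹' S : Set Λ) +ᵥ F := by
    rw [himage, ← image2_add, ← image2_vadd, image2_image_left]
    rfl
  rw [hvadd, measureReal_vadd_fundamentalDomain hF, himage,
    ncard_image_of_injective _ Subtype.val_injective]

end FundamentalDomain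

section Tiles

variable {E : Type*} [SeminormedAddCommGroup E] [NormedSpace ℝ E] {F S : Set E} {R : ℝ}

theorem inter_add_subset_union_thickening_frontier (hFR : F ⊆ ball 0 R) (L : Set E) :
    S ∩ L + F ⊆ S ∪ thickening R (frontier S) := by
  rintro _ ⟨g, ⟨hgS, -⟩, f, hf, rfl⟩
  refine or_iff_not_imp_left.2 fun hgfS ↦ ?_
  have hdist : dist (g + f) g < R := by simpa using hFR hf
  rw [← frontier_compl]
  exact mem_thickening_frontier hdist hgfS (not_not.2 hgS)

theorem ae_le_inter_add_union_thickening_frontier [MeasurableSpace E] {Λ : AddSubgroup E}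
    {μ : Measure E} (hF : IsAddFundamentalDomain Λ F μ) (hFR : F ⊆ ball 0 R) :
    S ≤ᵐ[μ] (S ∩ Λ + F ∪ thickening R (frontier S) : Set E) := by
  filter_upwards [hF.ae_covers] with x ⟨g, hgx⟩ hxS
  have hdist : dist x (-g : E) < R := by
    simpa [dist_eq_norm, add_comm, AddSubgroup.vadd_def] using hFR hgx
  by_cases hgS : (-g : E) ∈ S
  · exact Or.inl ⟨-g, ⟨hgS, neg_mem g.2⟩, g +ᵥ x, hgx, neg_add_cancel_left _ _⟩
  · exact Or.inr (mem_thickening_frontier hdist hxS hgS)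

end Tiles

section LatticePointCount

variable {E : Type*} [NormedAddCommGroup E] [NormedSpace ℝ E] [FiniteDimensional ℝ E]
  [MeasurableSpace E] [BorelSpace E] {μ : Measure E} [μ.IsAddHaarMeasure]
  {Λ : AddSubgroup E} {F S : Set E} {R : ℝ}

theorem abs_ncard_mul_measureReal_sub_le [Countable Λ]
    (hF : IsAddFundamentalDomain Λ F μ) (hFR : F ⊆ ball 0 R) (hS : IsBounded S) :
    |(S ∩ Λ).ncard * μ.real F - μ.real S| ≤ μ.real (thickening R (frontier S)) := by
  have : ProperSpace E := FiniteDimensional.proper ℝ E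
  have hS_fin : μ S ≠ ⊤ := hS.measure_lt_top.ne
  have hfr_fin : μ (thickening R (frontier S)) ≠ ⊤ :=
    (hS.closure.subset frontier_subset_closure).thickening.measure_lt_top.ne
  have hS_union_fin := measure_union_ne_top hS_fin hfr_fin
  have htiles_subset := inter_add_subset_union_thickening_frontier (S := S) hFR Λ
  have htiles_fin : μ (S ∩ Λ + F) ≠ ⊤ := measure_ne_top_of_subset htiles_subset hS_union_fin
  have htiles_le : μ.real (S ∩ Λ + F) ≤ μ.real S + μ.real (thickening R (frontier S)) :=
    (measureReal_mono htiles_subset hS_union_fin).trans (measureReal_union_le _ _)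
  have hle_tiles : μ.real S ≤ μ.real (S ∩ Λ + F) + μ.real (thickening R (frontier S)) :=
    (ENNReal.toReal_mono (measure_union_ne_top htiles_fin hfr_fin)
      (measure_mono_ae (ae_le_inter_add_union_thickening_frontier hF hFR))).trans
      (measureReal_union_le _ _)
  rw [← measureReal_inter_add_fundamentalDomain hF, abs_sub_le_iff]
  constructor <;> linarith

theorem measureReal_smul_vadd {s : ℝ} (hs : 0 ≤ s) (v : E) (T : Set E) :
    μ.real (s • (v +ᵥ T)) = s ^ Module.finrank ℝ E * μ.real T := by
  simp [Measure.real, Measure.addHaar_smul, measure_vadd, abs_of_nonneg, hs]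

theorem abs_ncard_smul_vadd_mul_div_sub_le [Countable Λ]
    (hF : IsAddFundamentalDomain Λ F μ) (hFR : F ⊆ ball 0 R) {P : Set E} (hP : IsBounded P)
    (v : E) {s : ℝ} (hs : 0 < s) :
    |(s • (v +ᵥ P) ∩ Λ).ncard * μ.real F / s ^ Module.finrank ℝ E - μ.real P| ≤
      μ.real (thickening (R / s) (frontier P)) := by
  have hsd : 0 < s ^ Module.finrank ℝ E := pow_pos hs _
  have hfr : thickening R (frontier (s • (v +ᵥ P))) =
      s • (v +ᵥ thickening (R / s) (frontier P)) := by
    rw [frontier_smul_set₀ hs.ne', frontier_vadd_set, thickening_smul_set₀ hs.ne',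
      thickening_vadd_set, Real.norm_of_nonneg hs.le]
  have hbound := abs_ncard_mul_measureReal_sub_le hF hFR ((hP.vadd v).smul₀ s)
  rw [hfr, measureReal_smul_vadd hs.le, measureReal_smul_vadd hs.le] at hbound
  refine le_of_mul_le_mul_left ?_ hsd
  rwa [← abs_of_pos hsd, ← abs_mul, abs_of_pos hsd, mul_sub, mul_div_cancel₀ _ hsd.ne']

end LatticePointCount

section Ehrhart

variable {d : ℕ} {P : Set (Fin d → ℝ)}

theorem latticePts_eq_span (d : ℕ) :
    latticePts d = (Submodule.span ℤ (range (Pi.basisFun ℝ (Fin d)))).toAddSubgroup := by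
  ext x
  simp [latticePts, Module.Basis.mem_span_iff_repr_mem, eq_comm]

theorem translateSet_eq_vadd (P : Set (Fin d → ℝ)) (v : Fin d → ℝ) :
    translateSet P v = v +ᵥ P := by
  simp [translateSet, ← image_vadd, add_comm]

theorem IsPolytope.isBounded (hP : IsPolytope P) : IsBounded P := by
  obtain ⟨V, -, rfl⟩ := hP
  exact isBounded_convexHull.2 V.finite_toSet.isBounded

theorem IsPolytope.convex (hP : IsPolytope P) : Convex ℝ P := by
  obtain ⟨V, -, rfl⟩ := hP
  exact convex_convexHull ℝ _

theorem fundamentalDomain_pi_basisFun_subset_ball (ι : Type*) [Fintype ι] :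
    ZSpan.fundamentalDomain (Pi.basisFun ℝ ι) ⊆ ball 0 1 := by
  intro x hx
  rw [ZSpan.fundamentalDomain_pi_basisFun] at hx
  rw [mem_ball_zero_iff, pi_norm_lt_iff one_pos]
  intro i
  rw [Real.norm_of_nonneg (hx i trivial).1]
  exact (hx i trivial).2

theorem abs_ehrhart_div_sub_volume_le (hP : IsBounded P) (v : Fin d → ℝ) {s : ℝ} (hs : 0 < s) :
    |ehrhart (translateSet P v) s / s ^ d - volume.real P| ≤
      volume.real (thickening (1 / s) (frontier P)) := by
  have hvol : volume.real (ZSpan.fundamentalDomain (Pi.basisFun ℝ (Fin d))) = 1 := by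
    simp [ZSpan.fundamentalDomain_pi_basisFun, Measure.real, volume_pi_pi]
  have : Countable (Submodule.span ℤ (range (Pi.basisFun ℝ (Fin d)))).toAddSubgroup :=
    inferInstanceAs (Countable (Submodule.span ℤ (range (Pi.basisFun ℝ (Fin d)))))
  have hbound := abs_ncard_smul_vadd_mul_div_sub_le
    (ZSpan.isAddFundamentalDomain' (Pi.basisFun ℝ (Fin d)) volume)
    (fundamentalDomain_pi_basisFun_subset_ball (Fin d)) hP v hs
  rwa [← latticePts_eq_span, hvol, mul_one, Module.finrank_fin_fun, ← translateSet_eq_vadd]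
    at hbound

theorem stmt8_general (hP : IsBounded P) (hfr : volume (frontier P) = 0) :
    ∀ ε : ℝ, 0 < ε → ∃ N : ℝ, 0 < N ∧ ∀ (v : Fin d → ℝ) (s : ℝ), N < s →
      |(ehrhart (translateSet P v) s : ℝ) / s ^ d - (volume P).toReal| < ε := by
  intro ε hε
  have hlim : Tendsto (fun s : ℝ ↦ volume.real (thickening (1 / s) (frontier P))) atTop (𝓝 0) := by
    have hthick := tendsto_measureReal_thickening (μ := volume)
      (hP.closure.subset (frontier_subset_closure (s := P)))
    rw [isClosed_frontier.closure_eq, measureReal_def, hfr, ENNReal.toReal_zero] at hthick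
    simpa only [one_div, Function.comp_def] using hthick.comp tendsto_inv_atTop_nhdsGT_zero
  obtain ⟨N, hN⟩ := eventually_atTop.1 (hlim.eventually_lt_const hε)
  refine ⟨max N 1, by positivity, fun v s hs ↦ ?_⟩
  obtain ⟨hNs, h1s⟩ := max_lt_iff.1 hs
  exact (abs_ehrhart_div_sub_volume_le hP v (one_pos.trans h1s)).trans_lt (hN s hNs.le)

end Ehrhart

/-- `L_{P+v}(s)/s^d → vol(P)` as `s → ∞`, uniformly in the translation
vector `v`, for a full-dimensional polytope `P`. -/
theorem stmt8 {d : ℕ} (P : Set (Fin d → ℝ)) (hP : IsPolytope P)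
    (hfull : (interior P).Nonempty) :
    ∀ ε : ℝ, 0 < ε → ∃ N : ℝ, 0 < N ∧ ∀ (v : Fin d → ℝ) (s : ℝ), N < s →
      |(ehrhart (translateSet P v) s : ℝ) / s ^ d - (volume P).toReal| < ε :=
  stmt8_general hP.isBounded (hP.convex.addHaar_frontier volume)
end

section
/- Let a_1, …, a_n ∈ ℤ^d be primitive integer vectors and let D ⊆ (0, ∞) be a dense subset of (0, ∞). Suppose b_1, …, b_n and c_1, …, c_n are real numbers such that P = ⋂_{i=1}^n {x ∈ ℝ^d : ⟨a_i, x⟩ ≤ b_i} and Q = ⋂_{i=1}^n {x ∈ ℝ^d : ⟨a_i, x⟩ ≤ c_i} are both compact with nonempty interior, that for every i one has b_i = max_{x∈P} ⟨a_i, x⟩ and c_i = max_{x∈Q} ⟨a_i, x⟩ (so each hyperplane {x : ⟨a_i, x⟩ = b_i} supports P and each {x : ⟨a_i, x⟩ = c_i} supports Q, i.e. each set F_i = P ∩ {x : ⟨a_i, x⟩ = b_i} is a nonempty face), and that L_{P+w}(s) = L_{Q+w}(s) for every w ∈ ℤ^d and every s ∈ D. Then b_i = c_i for all i; in particular P = Q.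 -/
open Set MeasureTheory Pointwise

/-!
Dilating by a small `s > 0` makes the lattice coarse compared with the bodies: a lattice point of
`s • (P + w)` is some `y ∈ ℤ^d` with `s⁻¹ • y - w ∈ P`, and the points `s⁻¹ • y` are `s⁻¹` apart, so
once `s⁻¹` exceeds the diameter of `P ∪ Q` at most one `y` can contribute. The Ehrhart functions
at `s` then only record whether the single point `s⁻¹ • y - w` lies in `P`, respectively in `Q`.
When `s⁻¹ = N + δ` with `N` an integer and `0 < δ < 1`, the choice `w = N • y` gives the point
`δ • y`, so for small `δ` these test points come close to any prescribed point. Hence a point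
interior to `P` cannot have a neighbourhood disjoint from `Q`, and vice versa.
-/

open Filter Topology Bornology

theorem eq_of_mem_latticePts_of_dist_lt_one {d : ℕ} {x y : Fin d → ℝ} (hx : x ∈ latticePts d)
    (hy : y ∈ latticePts d) (hxy : dist x y < 1) : x = y := by
  funext i
  obtain ⟨k, hk⟩ := hx i
  obtain ⟨m, hm⟩ := hy i
  have hkm : dist k m < 1 := by
    rw [← Int.dist_cast_real, ← hk, ← hm]
    exact (dist_le_pi_dist x y i).trans_lt hxy
  rw [hk, hm, Int.pairwise_one_le_dist.eq hkm.not_ge]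

theorem mem_smul_translateSet_iff {d : ℕ} {P : Set (Fin d → ℝ)} {s : ℝ} (hs : s ≠ 0)
    {w y : Fin d → ℝ} : y ∈ s • translateSet P w ↔ s⁻¹ • y - w ∈ P := by
  rw [mem_smul_set_iff_inv_smul_mem₀ hs, translateSet, image_add_right, mem_preimage,
    sub_eq_add_neg]

theorem ehrhart_translateSet_pos_iff {d : ℕ} {P B : Set (Fin d → ℝ)} {s : ℝ} {w y : Fin d → ℝ}
    (hB : IsBounded B) (hPB : P ⊆ B) (hs : 0 < s) (hsB : s * Metric.diam B < 1)
    (hy : y ∈ latticePts d) (hyB : s⁻¹ • y - w ∈ B) :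
    0 < ehrhart (translateSet P w) s ↔ s⁻¹ • y - w ∈ P := by
  have eq_y : ∀ y' ∈ s • translateSet P w ∩ latticePts d, y' = y := by
    rintro y' ⟨hy'P, hy'⟩
    rw [mem_smul_translateSet_iff hs.ne'] at hy'P
    refine eq_of_mem_latticePts_of_dist_lt_one hy' hy ?_
    calc dist y' y = s * dist (s⁻¹ • y' - w) (s⁻¹ • y - w) := by
          rw [dist_sub_right, dist_smul₀, Real.norm_of_nonneg (inv_pos.2 hs).le,
            mul_inv_cancel_left₀ hs.ne']
      _ ≤ s * Metric.diam B := by gcongr; exact Metric.dist_le_diam_of_mem hB (hPB hy'P) hyB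
      _ < 1 := hsB
  have hfin : (s • translateSet P w ∩ latticePts d).Finite := (finite_singleton y).subset eq_y
  rw [ehrhart, ncard_pos hfin, ← mem_smul_translateSet_iff hs.ne']
  constructor
  · rintro ⟨y', hy'⟩
    exact eq_y y' hy' ▸ hy'.1
  · exact fun hyP => ⟨y, hyP, hy⟩

theorem exists_dist_smul_intCast_sub_intCast_le_fract {ι : Type*} [Fintype ι] {t : ℝ}
    (ht : 0 < Int.fract t) (x : ι → ℝ) :
    ∃ z w : ι → ℤ, dist (t • (fun i => (z i : ℝ)) - fun i => (w i : ℝ)) x ≤ Int.fract t := by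
  refine ⟨fun i => ⌊x i / Int.fract t⌋, fun i => ⌊t⌋ * ⌊x i / Int.fract t⌋,
    (dist_pi_le_iff ht.le).2 fun i => ?_⟩
  have hcoord : t * ⌊x i / Int.fract t⌋ - ((⌊t⌋ * ⌊x i / Int.fract t⌋ : ℤ) : ℝ) =
      ⌊x i / Int.fract t⌋ * Int.fract t := by
    rw [Int.cast_mul, ← sub_mul, Int.self_sub_floor, mul_comm]
  simp only [Pi.sub_apply, Pi.smul_apply, smul_eq_mul]
  rw [hcoord, dist_comm, Real.dist_eq, abs_of_nonneg (Int.sub_floor_div_mul_nonneg _ ht)]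
  exact (Int.sub_floor_div_mul_lt _ ht).le

theorem exists_mem_Ioo_fract_inv_mem_Ioo {D : Set ℝ} (hD : ∀ᶠ s in 𝓝[>] 0, s ∈ closure D)
    {r ε : ℝ} (hr : 0 < r) (hε : 0 < ε) :
    ∃ s ∈ D, s ∈ Ioo 0 r ∧ Int.fract s⁻¹ ∈ Ioo 0 ε := by
  obtain ⟨u, hu, hDu⟩ := mem_nhdsGT_iff_exists_Ioo_subset.1 hD
  obtain ⟨N, hN⟩ := exists_nat_gt (min r u)⁻¹
  have hru : 0 < min r u := lt_min hr hu
  have hNpos : (0 : ℝ) < N := (inv_pos.2 hru).trans hN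
  have hNru : (N : ℝ)⁻¹ < min r u := inv_lt_of_inv_lt₀ hru hN
  have hη : 0 < min ε 1 := lt_min hε one_pos
  have hlt : (N + min ε 1)⁻¹ < (N : ℝ)⁻¹ := inv_strictAnti₀ hNpos (lt_add_of_pos_right _ hη)
  obtain ⟨s₀, hs₀⟩ := exists_between hlt
  have hs₀D : s₀ ∈ closure D :=
    hDu ⟨(by positivity : 0 < (N + min ε 1)⁻¹).trans hs₀.1,
      hs₀.2.trans (hNru.trans_le (min_le_right r u))⟩
  obtain ⟨s, ⟨hlo, hhi⟩, hsD⟩ := mem_closure_iff.1 hs₀D _ isOpen_Ioo hs₀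
  have hs : 0 < s := lt_trans (by positivity) hlo
  have hNs : N < s⁻¹ := (lt_inv_comm₀ hs hNpos).1 hhi
  have hsN : s⁻¹ < N + min ε 1 := inv_lt_of_inv_lt₀ (by positivity) hlo
  have hfract : Int.fract s⁻¹ = s⁻¹ - N :=
    Int.fract_eq_iff.2 ⟨sub_nonneg.2 hNs.le, by linarith [min_le_right ε 1], N, by simp⟩
  refine ⟨s, hsD, ⟨hs, hhi.trans (hNru.trans_le (min_le_left r u))⟩, ?_⟩
  rw [hfract]
  exact ⟨sub_pos.2 hNs, (sub_lt_iff_lt_add'.2 hsN).trans_le (min_le_left ε 1)⟩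

theorem interior_subset_closure_of_ehrhart_translateSet_eq {d : ℕ} {D : Set ℝ}
    (hD : ∀ᶠ s in 𝓝[>] 0, s ∈ closure D) {P Q : Set (Fin d → ℝ)} (hP : IsBounded P)
    (hQ : IsBounded Q)
    (hehr : ∀ w : Fin d → ℤ, ∀ s ∈ D,
      ehrhart (translateSet P fun i => (w i : ℝ)) s =
        ehrhart (translateSet Q fun i => (w i : ℝ)) s) :
    interior P ⊆ closure Q := by
  intro x hxP
  by_contra hxQ
  obtain ⟨ε, hε, hball⟩ := Metric.isOpen_iff.1
    (isOpen_interior.inter isClosed_closure.isOpen_compl) x ⟨hxP, hxQ⟩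
  have hdiam : 0 < Metric.diam (P ∪ Q) + 1 := add_pos_of_nonneg_of_pos Metric.diam_nonneg one_pos
  obtain ⟨s, hsD, ⟨hs, hsr⟩, hfract, hfractε⟩ :=
    exists_mem_Ioo_fract_inv_mem_Ioo hD (inv_pos.2 hdiam) hε
  obtain ⟨z, w, hzw⟩ := exists_dist_smul_intCast_sub_intCast_le_fract hfract x
  obtain ⟨hpP, hpQ⟩ := hball (Metric.mem_ball.2 (hzw.trans_lt hfractε))
  replace hpP := interior_subset hpP
  have hsdiam : s * Metric.diam (P ∪ Q) < 1 := calc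
    s * Metric.diam (P ∪ Q) < s * (Metric.diam (P ∪ Q) + 1) := by gcongr; exact lt_add_one _
    _ < 1 := by rwa [← lt_div_iff₀ hdiam, one_div]
  have pos_iff {S : Set (Fin d → ℝ)} (hS : S ⊆ P ∪ Q) :=
    ehrhart_translateSet_pos_iff (hP.union hQ) hS hs hsdiam (fun i => ⟨z i, rfl⟩) (Or.inl hpP)
  refine hpQ (subset_closure ((pos_iff subset_union_right).1 ?_))
  rw [← hehr w s hsD]
  exact (pos_iff subset_union_left).2 hpP

theorem subset_of_ehrhart_translateSet_eq {d : ℕ} {D : Set ℝ}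
    (hD : ∀ᶠ s in 𝓝[>] 0, s ∈ closure D) {P Q : Set (Fin d → ℝ)} (hPb : IsBounded P)
    (hQb : IsBounded Q) (hP : P ⊆ closure (interior P)) (hQ : IsClosed Q)
    (hehr : ∀ w : Fin d → ℤ, ∀ s ∈ D,
      ehrhart (translateSet P fun i => (w i : ℝ)) s =
        ehrhart (translateSet Q fun i => (w i : ℝ)) s) :
    P ⊆ Q := by
  have hint := interior_subset_closure_of_ehrhart_translateSet_eq hD hPb hQb hehr
  exact hP.trans (closure_minimal (hint.trans hQ.closure_eq.subset) hQ)

theorem convex_iInter_dotProd_le {ι : Sort*} {d : ℕ} (a : ι → Fin d → ℝ) (b : ι → ℝ) :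
    Convex ℝ (⋂ i, {x : Fin d → ℝ | dotProd (a i) x ≤ b i}) :=
  convex_iInter fun i => convex_halfSpace_le (dotProductBilin ℝ ℝ (a i)).isLinear (b i)

theorem closure_interior_eq_of_convex_of_isClosed {E : Type*} [AddCommGroup E] [Module ℝ E]
    [TopologicalSpace E] [IsTopologicalAddGroup E] [ContinuousSMul ℝ E] {K : Set E}
    (hconv : Convex ℝ K) (hclosed : IsClosed K) (hint : (interior K).Nonempty) :
    closure (interior K) = K :=
  (hconv.closure_interior_eq_closure_of_nonempty_interior hint).trans hclosed.closure_eq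

theorem stmt15_general {d : ℕ} {D : Set ℝ} (hD : ∀ᶠ s in 𝓝[>] 0, s ∈ closure D)
    {P Q : Set (Fin d → ℝ)} (hPb : IsBounded P) (hQb : IsBounded Q)
    (hP : closure (interior P) = P) (hQ : closure (interior Q) = Q)
    (hehr : ∀ w : Fin d → ℤ, ∀ s ∈ D,
      ehrhart (translateSet P fun i => (w i : ℝ)) s =
        ehrhart (translateSet Q fun i => (w i : ℝ)) s) :
    P = Q :=
  Subset.antisymm
    (subset_of_ehrhart_translateSet_eq hD hPb hQb hP.ge (hQ ▸ isClosed_closure) hehr)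
    (subset_of_ehrhart_translateSet_eq hD hQb hPb hQ.ge (hP ▸ isClosed_closure)
      fun w s hs => (hehr w s hs).symm)

/-- recovering the right-hand sides of the supporting half-spaces of a
full-dimensional semi-rational polytope from the Ehrhart functions of its integer
translates, known only on a dense set of dilation parameters. -/
theorem stmt15 {d n : ℕ} (a : Fin n → Fin d → ℤ)
    (hprim : ∀ i, Finset.univ.gcd (a i) = 1)
    (D : Set ℝ) (hD : D ⊆ Set.Ioi (0 : ℝ)) (hDdense : Set.Ioi (0 : ℝ) ⊆ closure D)
    (b c : Fin n → ℝ) (P Q : Set (Fin d → ℝ))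
    (hPdef : P = ⋂ i, {x : Fin d → ℝ | dotProd (fun j => (a i j : ℝ)) x ≤ b i})
    (hQdef : Q = ⋂ i, {x : Fin d → ℝ | dotProd (fun j => (a i j : ℝ)) x ≤ c i})
    (hPc : IsCompact P) (hPi : (interior P).Nonempty)
    (hQc : IsCompact Q) (hQi : (interior Q).Nonempty)
    (hbmax : ∀ i, IsGreatest ((fun x => dotProd (fun j => (a i j : ℝ)) x) '' P) (b i))
    (hcmax : ∀ i, IsGreatest ((fun x => dotProd (fun j => (a i j : ℝ)) x) '' Q) (c i))
    (hehr : ∀ (w : Fin d → ℤ), ∀ s ∈ D,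
      ehrhart (translateSet P (fun i => (w i : ℝ))) s =
      ehrhart (translateSet Q (fun i => (w i : ℝ))) s) :
    (∀ i, b i = c i) ∧ P = Q := by
  have hPQ : P = Q := stmt15_general (eventually_nhdsWithin_of_forall hDdense)
    hPc.isBounded hQc.isBounded
    (closure_interior_eq_of_convex_of_isClosed (hPdef ▸ convex_iInter_dotProd_le _ b)
      hPc.isClosed hPi)
    (closure_interior_eq_of_convex_of_isClosed (hQdef ▸ convex_iInter_dotProd_le _ c)
      hQc.isClosed hQi)
    hehr
  exact ⟨fun i => (hbmax i).unique (hPQ ▸ hcmax i), hPQ⟩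
end
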